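/- Let X be a topological space and R ⊆ X. Player α has a winning strategy in the Banach–Mazur game BM(R) on X if and only if R is residual in X (its complement is meager). -/

import Mathlib

open Set Topology

/-- `σ` is a winning strategy for player α in the Banach–Mazur game `BM(R)`:
given any history ending with a (nonempty open) move `W` of β, α answers with a
nonempty open subset of `W`, and for every play compatible with `σ` the
intersection of α's moves is contained in `R`. -/
def BMAlphaWinning {X : Type*} [TopologicalSpace X] (R : Set X)
    (σ : List (Set X) → Set X) : Prop :=
  (∀ l : List (Set X), ∀ W : Set X, IsOpen W → W.Nonempty →
    IsOpen (σ (l ++ [W])) ∧ (σ (l ++ [W])).Nonempty ∧ σ (l ++ [W]) ⊆ W) ∧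
  ∀ V : ℕ → Set X, (∀ n, IsOpen (V n) ∧ (V n).Nonempty) →
    (∀ n : ℕ, V (n + 1) ⊆ σ (List.ofFn fun i : Fin (n + 1) => V i.1)) →
    (⋂ n : ℕ, σ (List.ofFn fun i : Fin (n + 1) => V i.1)) ⊆ R

/-- If `f` sends each nonempty open set to a nonempty open subset of it, then every open set `U`
has a family of nonempty open subsets whose images under `f` are pairwise disjoint with union
dense in `U`. -/
theorem exists_pairwiseDisjoint_subset_closure_biUnion {X : Type*} [TopologicalSpace X]
    {f : Set X → Set X}
    (hf : ∀ W : Set X, IsOpen W → W.Nonempty → IsOpen (f W) ∧ (f W).Nonempty ∧ f W ⊆ W)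
    {U : Set X} (hU : IsOpen U) :
    ∃ F : Set (Set X), (∀ W ∈ F, IsOpen W ∧ W.Nonempty ∧ W ⊆ U) ∧ F.PairwiseDisjoint f ∧
      U ⊆ closure (⋃ W ∈ F, f W) := by
  obtain ⟨F, hF⟩ := zorn_subset
    {F : Set (Set X) | (∀ W ∈ F, IsOpen W ∧ W.Nonempty ∧ W ⊆ U) ∧ F.PairwiseDisjoint f} (by
      intro c hc hchain
      refine ⟨⋃₀ c, ⟨?_, ?_⟩, fun s hs => subset_sUnion_of_mem hs⟩
      · rintro W ⟨s, hs, hW⟩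
        exact (hc hs).1 W hW
      · exact (pairwiseDisjoint_sUnion hchain.directedOn).2 fun s hs => (hc hs).2)
  refine ⟨F, hF.prop.1, hF.prop.2, ?_⟩
  by_contra hne
  obtain ⟨x, hxU, hx⟩ := not_subset.1 hne
  let W : Set X := U \ closure (⋃ W ∈ F, f W)
  have hWo : IsOpen W := hU.sdiff isClosed_closure
  have hWne : W.Nonempty := ⟨x, hxU, hx⟩
  obtain ⟨-, hfne, hfW⟩ := hf W hWo hWne
  have hdisj : ∀ W' ∈ F, Disjoint (f W) (f W') := fun W' hW' =>
    disjoint_left.2 fun y hy hy' => (hfW hy).2 (subset_closure (mem_biUnion hW' hy'))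
  have hmem : W ∈ F := by
    refine hF.le_of_ge (y := insert W F) ⟨?_, ?_⟩ (subset_insert W F) (mem_insert W F)
    · rintro W' (rfl | hW')
      · exact ⟨hWo, hWne, sdiff_subset⟩
      · exact hF.prop.1 W' hW'
    · exact hF.prop.2.insert fun W' hW' _ => hdisj W' hW'
  exact hfne.ne_empty (disjoint_self.1 (hdisj W hmem))

/-- The histories of length `n` all of whose moves are taken from the families `F`. -/
def histories {A : Type*} (F : List A → Set A) : ℕ → Set (List A)
  | 0 => {[]}
  | n + 1 => {l | ∃ l' ∈ histories F n, ∃ W ∈ F l', l = l' ++ [W]}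

theorem histories_eq_of_mem {A X : Type*} {F : List A → Set A} {U : List A → Set X}
    (hsub : ∀ n, ∀ l ∈ histories F n, ∀ W ∈ F l, U (l ++ [W]) ⊆ U l)
    (hdisj : ∀ n, ∀ l ∈ histories F n, (F l).PairwiseDisjoint fun W => U (l ++ [W])) {x : X}
    (n : ℕ) : ∀ l ∈ histories F n, ∀ l' ∈ histories F n, x ∈ U l → x ∈ U l' → l = l' := by
  induction n with
  | zero =>
    rintro l rfl l' rfl - -
    rfl
  | succ n ih =>
    rintro _ ⟨l, hl, W, hW, rfl⟩ _ ⟨l', hl', W', hW', rfl⟩ hx hx'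
    obtain rfl := ih l hl l' hl' (hsub n l hl W hW hx) (hsub n l' hl' W' hW' hx')
    rw [(hdisj n l hl).elim hW hW' (not_disjoint_iff.2 ⟨x, hx, hx'⟩)]

theorem IsMeagre.exists_bmAlphaWinning {X : Type*} [TopologicalSpace X] {R : Set X}
    (h : IsMeagre Rᶜ) : ∃ σ : List (Set X) → Set X, BMAlphaWinning R σ := by
  rw [IsMeagre, compl_compl, mem_residual_iff] at h
  obtain ⟨S, hSo, hSd, hSc, hSR⟩ := h
  obtain ⟨D, hD⟩ := (hSc.insert univ).exists_eq_range (insert_nonempty _ _)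
  have hDmem : ∀ n, D n = univ ∨ D n ∈ S := fun n =>
    (hD.symm ▸ mem_range_self n : D n ∈ insert univ S)
  have hDo : ∀ n, IsOpen (D n) := fun n =>
    (hDmem n).elim (fun h => h ▸ isOpen_univ) (hSo _)
  have hDd : ∀ n, Dense (D n) := fun n =>
    (hDmem n).elim (fun h => h ▸ dense_univ) (hSd _)
  refine ⟨fun l => l.getLastD univ ∩ D (l.length - 1), fun l W hW hWne => ?_, fun V _ _ => ?_⟩
  · simp only [List.getLastD_concat]
    exact ⟨hW.inter (hDo _), (hDd _).inter_open_nonempty W hW hWne, inter_subset_left⟩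
  · refine Subset.trans (fun x hx => mem_sInter.2 fun t ht => ?_) hSR
    obtain ⟨n, rfl⟩ : t ∈ range D := hD ▸ mem_insert_of_mem _ ht
    simpa using (mem_iInter.1 hx n).2

theorem BMAlphaWinning.isMeagre_compl {X : Type*} [TopologicalSpace X] {R : Set X}
    {σ : List (Set X) → Set X} (h : BMAlphaWinning R σ) : IsMeagre Rᶜ := by
  classical
  obtain ⟨hσ, hwin⟩ := h
  let U : List (Set X) → Set X := fun l => if l = [] then univ else σ l
  have hUσ : ∀ l W, U (l ++ [W]) = σ (l ++ [W]) := fun l W => if_neg (by simp)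
  have hfam : ∀ l, ∃ F : Set (Set X), IsOpen (U l) →
      (∀ W ∈ F, IsOpen W ∧ W.Nonempty ∧ W ⊆ U l) ∧
      F.PairwiseDisjoint (fun W => U (l ++ [W])) ∧ U l ⊆ closure (⋃ W ∈ F, U (l ++ [W])) := by
    intro l
    by_cases hl : IsOpen (U l)
    · obtain ⟨F, hF⟩ := exists_pairwiseDisjoint_subset_closure_biUnion
        (f := fun W => U (l ++ [W])) (fun W hW hWne => by simpa only [hUσ] using hσ l W hW hWne) hl
      exact ⟨F, fun _ => hF⟩
    · exact ⟨∅, fun h => absurd h hl⟩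
  choose F hF using hfam
  have hopen : ∀ n, ∀ l ∈ histories F n, IsOpen (U l) := by
    intro n
    induction n with
    | zero =>
      rintro l rfl
      exact isOpen_univ
    | succ n ih =>
      rintro _ ⟨l, hl, W, hW, rfl⟩
      obtain ⟨hWo, hWne, -⟩ := (hF l (ih l hl)).1 W hW
      exact hUσ l W ▸ (hσ l W hWo hWne).1
  have hsub : ∀ n, ∀ l ∈ histories F n, ∀ W ∈ F l, U (l ++ [W]) ⊆ U l := by
    intro n l hl W hW
    obtain ⟨hWo, hWne, hWU⟩ := (hF l (hopen n l hl)).1 W hW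
    exact hUσ l W ▸ (hσ l W hWo hWne).2.2.trans hWU
  have hdense : ∀ n, Dense (⋃ l ∈ histories F n, U l) := by
    intro n
    induction n with
    | zero =>
      have : (⋃ l ∈ histories F 0, U l) = univ := by simp [histories, U]
      exact this ▸ dense_univ
    | succ n ih =>
      refine dense_closure.1 (ih.mono (iUnion₂_subset fun l hl => ?_))
      refine (hF l (hopen n l hl)).2.2.trans (closure_mono (iUnion₂_subset fun W hW => ?_))
      exact subset_biUnion_of_mem (u := U) (⟨l, hl, W, hW, rfl⟩ : l ++ [W] ∈ histories F (n + 1))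
  have hres : (⋂ n, ⋃ l ∈ histories F n, U l) ∈ residual X :=
    countable_iInter_mem.2 fun n =>
      residual_of_dense_open (isOpen_biUnion (hopen n)) (hdense n)
  rw [IsMeagre, compl_compl]
  refine Filter.mem_of_superset hres fun x hx => ?_
  simp only [mem_iInter, mem_iUnion₂, exists_prop] at hx
  choose L hL hxL using hx
  have hstep : ∀ n, ∃ W ∈ F (L n), L (n + 1) = L n ++ [W] := by
    intro n
    obtain ⟨l, hl, W, hW, hlW⟩ := hL (n + 1)
    have hxl : x ∈ U l := hsub n l hl W hW (hlW ▸ hxL (n + 1))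
    obtain rfl := histories_eq_of_mem hsub (fun m l hl => (hF l (hopen m l hl)).2.1) n
      l hl (L n) (hL n) hxl (hxL n)
    exact ⟨W, hW, hlW⟩
  choose V hVF hLV using hstep
  have hofFn : ∀ n, List.ofFn (fun i : Fin n => V i.1) = L n := by
    intro n
    induction n with
    | zero => simpa [histories] using (hL 0).symm
    | succ n ih =>
      rw [List.ofFn_succ_last, hLV, ← ih]
      simp only [Fin.val_castSucc, Fin.val_last]
  have hσL : ∀ n, σ (L (n + 1)) = U (L (n + 1)) := fun n => by rw [hLV, hUσ]
  have hV := fun n => (hF (L n) (hopen n _ (hL n))).1 (V n) (hVF n)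
  refine hwin V (fun n => ⟨(hV n).1, (hV n).2.1⟩) (fun n => ?_) (mem_iInter.2 fun n => ?_)
  · rw [hofFn, hσL]
    exact (hV (n + 1)).2.2
  · rw [hofFn, hσL]
    exact hxL (n + 1)

theorem banach_mazur_characterization {X : Type*} [TopologicalSpace X] (R : Set X) :
    (∃ σ : List (Set X) → Set X, BMAlphaWinning R σ) ↔ IsMeagre Rᶜ :=
  ⟨fun ⟨_, hσ⟩ => hσ.isMeagre_compl, IsMeagre.exists_bmAlphaWinning⟩
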